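/- Let 0 ≤ r1, r2, r3 ≤ n and let 0 ≤ s ≤ min(rᵢ, n − rᵢ) for i = 1, 2, 3. Then Λ_s^{r2,r3} ∘ Λ_s^{r1,r2} = (binom(n, r2) / (binom(n, s) − binom(n, s−1))) · Λ_s^{r1,r3} as linear maps (X_{r1} → ℂ) → (X_{r3} → ℂ), where binom(n, −1) = 0. -/

import Mathlib

/-- Falling factorial `z(z-1)⋯(z-k+1)` for complex `z`. -/
noncomputable def cfall (z : ℂ) (k : ℕ) : ℂ := ∏ i ∈ Finset.range k, (z - i)

/-- Generalized binomial coefficient `binom(t, j)` for complex `t`. -/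
noncomputable def cbinom (t : ℂ) (j : ℕ) : ℂ := cfall t j / (Nat.factorial j)

/-- The Hahn kernel `λ_s^{r1,r2}(t; n)`. -/
noncomputable def hahn (n r1 r2 s : ℕ) (t : ℂ) : ℂ :=
  ∑ j ∈ Finset.range (s + 1),
    (-1 : ℂ) ^ j * cbinom t j * cfall (s : ℂ) j * cfall ((n : ℂ) - s + 1) j /
      (cfall ((n : ℂ) - r1) j * cfall (r2 : ℂ) j)

/-- The operator `Λ_s^{r1,r2} : (X_{r1} → ℂ) → (X_{r2} → ℂ)` with kernel
`λ_s^{r1,r2}(|x2 \ x1|; n)`. -/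
noncomputable def Lam (Ω : Type*) [Fintype Ω] [DecidableEq Ω] (n r1 r2 s : ℕ)
    (ψ : {x : Finset Ω // x.card = r1} → ℂ) : {x : Finset Ω // x.card = r2} → ℂ :=
  fun x2 => ∑ x1 : {x : Finset Ω // x.card = r1},
    hahn n r1 r2 s ((((x2 : Finset Ω) \ (x1 : Finset Ω)).card : ℕ) : ℂ) * ψ x1

lemma cfall_zero (z : ℂ) : cfall z 0 = 1 := by simp [cfall]
lemma cfall_succ (z : ℂ) (k : ℕ) : cfall z (k+1) = cfall z k * (z - k) := by
  simp [cfall, Finset.prod_range_succ]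
lemma cfall_succ' (z : ℂ) (k : ℕ) : cfall z (k+1) = z * cfall (z-1) k := by
  simp only [cfall, Finset.prod_range_succ']
  rw [mul_comm]
  congr 1
  · simp
  · apply Finset.prod_congr rfl
    intro i _
    push_cast; ring
lemma cfall_add (z : ℂ) (a b : ℕ) : cfall z (a+b) = cfall z a * cfall (z-a) b := by
  simp only [cfall, Finset.prod_range_add]
  congr 1
  apply Finset.prod_congr rfl
  intro i _
  push_cast; ring
lemma cfall_swap (z : ℂ) (a b : ℕ) :
    cfall z a * cfall (z-a) b = cfall z b * cfall (z-b) a := by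
  rw [← cfall_add, ← cfall_add, add_comm]
lemma cfall_nat (a k : ℕ) : cfall (a:ℂ) k = (a.descFactorial k : ℂ) := by
  induction k with
  | zero => simp [cfall]
  | succ k ih =>
    rw [cfall_succ, ih, Nat.descFactorial_succ]
    by_cases h : k ≤ a
    · push_cast [Nat.cast_sub h]; ring
    · simp [Nat.descFactorial_of_lt (not_le.1 h)]
lemma cfall_ne (a k : ℕ) (h : k ≤ a) : cfall (a:ℂ) k ≠ 0 := by
  rw [cfall_nat]
  have := Nat.descFactorial_pos.2 h
  exact_mod_cast this.ne'
lemma cfall_choose (a k : ℕ) : cfall (a:ℂ) k = (k.factorial:ℂ) * (a.choose k : ℂ) := by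
  rw [cfall_nat, Nat.descFactorial_eq_factorial_mul_choose]; push_cast; rfl
lemma cbinom_nat (a k : ℕ) : cbinom (a:ℂ) k = (a.choose k : ℂ) := by
  rw [cbinom, cfall_choose]
  have : (k.factorial:ℂ) ≠ 0 := by exact_mod_cast k.factorial_ne_zero
  field_simp

/-- `binom(a-j, r-j) [a]_j = binom(a,r) [r]_j` -/
lemma choose_shift (a r j : ℕ) (hj : j ≤ r) (hr : r ≤ a) :
    ((a-j).choose (r-j) : ℂ) * cfall (a:ℂ) j = (a.choose r : ℂ) * cfall (r:ℂ) j := by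
  rw [cfall_choose, cfall_choose]
  have := Nat.choose_mul (n := a) hj
  have h2 : (a.choose r : ℂ) * (r.choose j) = a.choose j * (a-j).choose (r-j) := by exact_mod_cast this
  linear_combination (-(j.factorial:ℂ)) * h2

open Polynomial in
lemma sum_poly_zero (s : ℕ) (P : ℂ[X]) (h : P.natDegree < s) :
    ∑ j ∈ Finset.range (s+1), (-1:ℂ)^j * (s.choose j) * P.eval (j:ℂ) = 0 := by
  have h1 := fwdDiff_iter_eq_sum_shift (1:ℂ) (fun x => P.eval x) s 0
  have h2 := congrFun (Polynomial.fwdDiff_iter_eq_zero_of_degree_lt h) 0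
  have h3 : (0:ℂ) = ∑ k ∈ Finset.range (s+1), ((-1:ℤ)^(s-k) * (s.choose k)) • P.eval (k:ℂ) := by
    have := h2.symm.trans h1
    simpa using this
  have h4 : ∑ j ∈ Finset.range (s+1), (-1:ℂ)^j * (s.choose j) * P.eval (j:ℂ)
      = (-1)^s * ∑ k ∈ Finset.range (s+1), ((-1:ℤ)^(s-k) * (s.choose k)) • P.eval (k:ℂ) := by
    rw [Finset.mul_sum]
    apply Finset.sum_congr rfl
    intro j hj
    have hj' : j ≤ s := by simpa [Nat.lt_succ_iff] using hj
    obtain ⟨d, rfl⟩ := Nat.exists_eq_add_of_le hj'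
    have e : ((-1:ℂ))^d * (-1)^d = 1 := by rw [← mul_pow]; simp
    simp only [zsmul_eq_mul, Nat.add_sub_cancel_left]
    push_cast
    rw [pow_add]
    linear_combination (-(-1)^j * ((j+d).choose j : ℂ) * P.eval (j:ℂ)) * e
  rw [h4, ← h3, mul_zero]

open Polynomial in
noncomputable def Qp (a : ℂ) (k : ℕ) : ℂ[X] := ∏ i ∈ Finset.range k, (C (a - i) - X)
open Polynomial in
lemma Qp_eval (a x : ℂ) (k : ℕ) : (Qp a k).eval x = cfall (a - x) k := by
  simp only [Qp, cfall, eval_prod]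
  apply Finset.prod_congr rfl
  intro i _
  simp; ring
open Polynomial in
lemma Qp_deg (a : ℂ) (k : ℕ) : (Qp a k).natDegree ≤ k := by
  unfold Qp
  refine (natDegree_prod_le _ _).trans ?_
  calc _ ≤ ∑ i ∈ Finset.range k, 1 := by
        apply Finset.sum_le_sum
        intro i _
        refine (natDegree_sub_le _ _).trans ?_
        rw [natDegree_C, natDegree_X]
        exact le_of_eq (by norm_num)
    _ = k := by simp

lemma vanish (s a b : ℕ) (x y : ℂ) (h : a + b < s) :
    ∑ j ∈ Finset.range (s+1), (-1:ℂ)^j * (s.choose j) * (cfall (x - j) a * cfall (y - j) b) = 0 := by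
  have := sum_poly_zero s (Qp x a * Qp y b) (lt_of_le_of_lt (Polynomial.natDegree_mul_le.trans (add_le_add (Qp_deg x a) (Qp_deg y b))) h)
  simpa [Qp_eval] using this

lemma alt_pascal (s : ℕ) (f : ℕ → ℂ) :
    ∑ j ∈ Finset.range (s+1+1), (-1:ℂ)^j * ((s+1).choose j) * f j =
    ∑ j ∈ Finset.range (s+1), (-1:ℂ)^j * (s.choose j) * f j -
    ∑ j ∈ Finset.range (s+1), (-1:ℂ)^j * (s.choose j) * f (j+1) := by
  rw [Finset.sum_range_succ']
  have h2 : ∑ j ∈ Finset.range (s+1), (-1:ℂ)^j * (s.choose j) * f j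
    = ∑ j ∈ Finset.range (s+1), (-1:ℂ)^(j+1) * (s.choose (j+1)) * f (j+1) + f 0 := by
    have : ∑ j ∈ Finset.range (s+1+1), (-1:ℂ)^j * (s.choose j) * f j = ∑ j ∈ Finset.range (s+1), (-1:ℂ)^j * (s.choose j) * f j := by
      rw [Finset.sum_range_succ _ (s+1)]; simp
    rw [← this, Finset.sum_range_succ']; simp
  rw [h2, add_sub_right_comm, ← Finset.sum_sub_distrib]
  simp only [Nat.choose_zero_right, pow_zero, Nat.cast_one, one_mul]
  congr 1
  apply Finset.sum_congr rfl
  intro j _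
  rw [Nat.choose_succ_succ]; push_cast; ring

/-- Chu–Vandermonde -/
lemma chu (u : ℕ) : ∀ (N : ℂ) (m : ℕ), u ≤ m →
    ∑ j ∈ Finset.range (u+1), (-1:ℂ)^j * (u.choose j) * (cfall N j / cfall (m:ℂ) j)
      = cfall (m - N) u / cfall (m:ℂ) u := by
  induction u with
  | zero => intro N m _; simp [cfall]
  | succ u ih =>
    intro N m hm
    obtain ⟨k, rfl⟩ : ∃ k, m = k+1 := ⟨m-1, by omega⟩
    rw [alt_pascal, ih N (k+1) (by omega)]
    have e : ∑ j ∈ Finset.range (u+1), (-1:ℂ)^j * (u.choose j) * (cfall N (j+1) / cfall ((k+1:ℕ):ℂ) (j+1))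
       = N / (k+1) * (cfall (k - (N-1)) u / cfall (k:ℂ) u) := by
      rw [← ih (N-1) k (by omega), Finset.mul_sum]
      apply Finset.sum_congr rfl
      intro j _
      rw [cfall_succ', cfall_succ']
      push_cast
      rw [add_sub_cancel_right, mul_div_mul_comm]; ring
    rw [e, cfall_succ]
    have h1 := cfall_ne (k+1) (u+1) hm
    have h2 := cfall_ne k u (by omega)
    have h3 := cfall_ne (k+1) u (by omega)
    have h5 : ((k:ℂ)+1) ≠ 0 := by exact_mod_cast k.succ_ne_zero
    have h4 : cfall ((k+1:ℕ):ℂ) u * ((k+1:ℕ) - u) = (k+1) * cfall (k:ℂ) u := by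
      rw [← cfall_succ, cfall_succ']; push_cast; rw [add_sub_cancel_right]
    have h6 : cfall ((k+1:ℕ):ℂ) (u+1) = (k+1) * cfall (k:ℂ) u := by
      rw [cfall_succ']; push_cast; rw [add_sub_cancel_right]
    rw [h6]
    have h7 : (k:ℂ) - (N-1) = (k+1:ℕ) - N := by push_cast; ring
    rw [h7]
    generalize cfall (((k+1:ℕ):ℂ) - N) u = A at *
    generalize cfall ((k+1:ℕ):ℂ) u = B at *
    generalize cfall (k:ℂ) u = D at *
    field_simp
    push_cast at *
    linear_combination (-A) * h4

lemma harm (s : ℕ) : ∀ (N : ℕ), s + 1 ≤ N →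
    ∑ j ∈ Finset.range (s+1), (-1:ℂ)^j * (s.choose j) * (1 / ((N:ℂ) - j))
      = (-1)^s * s.factorial / cfall (N:ℂ) (s+1) := by
  induction s with
  | zero => intro N _; simp [cfall]
  | succ s ih =>
    intro N hN
    obtain ⟨k, rfl⟩ : ∃ k, N = k+1 := ⟨N-1, by omega⟩
    rw [alt_pascal, ih (k+1) (by omega)]
    have e : ∑ j ∈ Finset.range (s+1), (-1:ℂ)^j * (s.choose j) * (1 / (((k+1:ℕ):ℂ) - (j+1:ℕ)))
        = (-1)^s * s.factorial / cfall (k:ℂ) (s+1) := by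
      rw [← ih k (by omega)]
      apply Finset.sum_congr rfl
      intro j _
      push_cast
      congr 2; ring
    rw [e]
    have h6 : cfall ((k+1:ℕ):ℂ) (s+1+1) = (k+1) * cfall (k:ℂ) (s+1) := by
      rw [cfall_succ']; push_cast; rw [add_sub_cancel_right]
    have h7 := cfall_succ ((k+1:ℕ):ℂ) (s+1)
    rw [h6] at h7
    have h1 := cfall_ne (k+1) (s+1) (by omega)
    have h2 := cfall_ne k (s+1) (by omega)
    have h5 : ((k:ℂ)+1) ≠ 0 := by exact_mod_cast k.succ_ne_zero
    rw [h6, Nat.factorial_succ]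
    generalize cfall ((k+1:ℕ):ℂ) (s+1) = B at *
    generalize cfall (k:ℂ) (s+1) = D at *
    field_simp
    push_cast at *
    linear_combination ((-1)^s * (s.factorial:ℂ)) * h7

lemma harm2 (s N : ℕ) (m : ℂ) (hN : s + 1 ≤ N) (u : ℕ) (hu : u ≤ s) :
    ∑ j ∈ Finset.range (s+1), (-1:ℂ)^j * (s.choose j) * (cfall (m - j) u / ((N:ℂ) - j))
      = cfall (m - N) u * ((-1)^s * s.factorial / cfall (N:ℂ) (s+1)) := by
  induction u with
  | zero => rw [← harm s N hN]; simp [cfall]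
  | succ u ih =>
    rw [cfall_succ, mul_right_comm, ← ih (by omega)]
    have h0 := vanish s u 0 m 0 (by omega)
    rw [← add_zero (_ * _), ← h0, Finset.sum_mul, ← Finset.sum_add_distrib]
    apply Finset.sum_congr rfl
    intro j hj
    have hj' : j ≤ s := by simpa [Nat.lt_succ_iff] using hj
    have : (N:ℂ) - j ≠ 0 := by
      rw [sub_ne_zero]; exact_mod_cast (by omega : N ≠ j)
    rw [cfall_succ, cfall_zero]
    field_simp
    ring

lemma card_super {Ω : Type*} [DecidableEq Ω] (S J : Finset Ω) (r : ℕ) (hJ : J ⊆ S) (hr : J.card ≤ r) :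
    ((S.powersetCard r).filter (fun x => J ⊆ x)).card = (S.card - J.card).choose (r - J.card) := by
  rw [← Finset.card_sdiff_of_subset hJ, ← Finset.card_powersetCard]
  apply Finset.card_bij' (fun x _ => x \ J) (fun x _ => x ∪ J)
  · intro x hx
    simp only [Finset.mem_filter, Finset.mem_powersetCard] at hx ⊢
    exact ⟨Finset.sdiff_subset_sdiff hx.1.1 le_rfl, by rw [Finset.card_sdiff_of_subset hx.2, hx.1.2]⟩
  · intro x hx
    simp only [Finset.mem_filter, Finset.mem_powersetCard] at hx ⊢
    refine ⟨⟨Finset.union_subset (hx.1.trans Finset.sdiff_subset) hJ, ?_⟩, Finset.subset_union_right⟩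
    rw [Finset.card_union_of_disjoint, hx.2]
    · omega
    · exact Finset.disjoint_of_subset_left hx.1 Finset.sdiff_disjoint
  · intro x hx
    simp only [Finset.mem_filter, Finset.mem_powersetCard] at hx
    exact Finset.sdiff_union_of_subset hx.2
  · intro x hx
    simp only [Finset.mem_powersetCard] at hx
    rw [Finset.union_sdiff_right]
    exact Finset.sdiff_eq_self_of_disjoint (Finset.disjoint_of_subset_left hx.1 Finset.sdiff_disjoint)

lemma sum_choose {Ω : Type*} [DecidableEq Ω] (S T : Finset Ω) (r j : ℕ) (hj : j ≤ r) :
    ∑ x ∈ S.powersetCard r, ((x \ T).card.choose j : ℂ)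
      = ((S \ T).card.choose j : ℂ) * ((S.card - j).choose (r - j) : ℂ) := by
  have h1 : ∀ x ∈ S.powersetCard r, ((x \ T).card.choose j : ℂ) =
      ∑ J ∈ (S \ T).powersetCard j, if J ⊆ x then (1:ℂ) else 0 := by
    intro x hx
    rw [Finset.mem_powersetCard] at hx
    rw [Finset.sum_boole, ← Finset.card_powersetCard]
    congr 2
    ext J
    simp only [Finset.mem_filter, Finset.mem_powersetCard, Finset.subset_sdiff]
    constructor
    · rintro ⟨⟨a, b⟩, c⟩
      exact ⟨⟨⟨a.trans hx.1, b⟩, c⟩, a⟩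
    · rintro ⟨⟨⟨a, b⟩, c⟩, d⟩
      exact ⟨⟨d, b⟩, c⟩
  rw [Finset.sum_congr rfl h1, Finset.sum_comm]
  have h2 : ∀ J ∈ (S \ T).powersetCard j, (∑ x ∈ S.powersetCard r, if J ⊆ x then (1:ℂ) else 0)
      = ((S.card - j).choose (r - j) : ℂ) := by
    intro J hJ
    rw [Finset.mem_powersetCard] at hJ
    rw [Finset.sum_boole, card_super S J r (hJ.1.trans Finset.sdiff_subset) (by omega), hJ.2]
  rw [Finset.sum_congr rfl h2, Finset.sum_const, Finset.card_powersetCard, nsmul_eq_mul]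

/-- Averaging the kernel over `r`-subsets of `S`. -/
lemma sum_hahn {Ω : Type*} [DecidableEq Ω] (S T : Finset Ω) (n r1 r s : ℕ) (hs : s ≤ r)
    (hr : r ≤ S.card) :
    ∑ x ∈ S.powersetCard r, hahn n r1 r s ((x \ T).card : ℂ)
      = (S.card.choose r : ℂ) * hahn n r1 S.card s ((S \ T).card : ℂ) := by
  simp only [hahn, cbinom_nat]
  rw [Finset.sum_comm, Finset.mul_sum]
  apply Finset.sum_congr rfl
  intro j hj
  have hj' : j ≤ s := by simpa [Nat.lt_succ_iff] using hj
  have h1 := choose_shift S.card r j (by omega) hr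
  have e := sum_choose S T r j (by omega)
  have hn1 := cfall_ne r j (by omega)
  have hn2 := cfall_ne S.card j (by omega)
  have h3 : ((S.card - j).choose (r - j) : ℂ) / cfall (r:ℂ) j
      = (S.card.choose r : ℂ) / cfall (S.card:ℂ) j := by
    field_simp; linear_combination h1
  calc _ = (∑ x ∈ S.powersetCard r, ((x \ T).card.choose j : ℂ)) *
        ((-1)^j * cfall (s:ℂ) j * cfall ((n:ℂ) - s + 1) j / (cfall ((n:ℂ) - r1) j * cfall (r:ℂ) j)) := by
        rw [Finset.sum_mul]
        apply Finset.sum_congr rfl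
        intro x _
        ring
    _ = ((S \ T).card.choose j : ℂ) * ((-1)^j * cfall (s:ℂ) j * cfall ((n:ℂ) - s + 1) j / cfall ((n:ℂ) - r1) j)
         * (((S.card - j).choose (r - j) : ℂ) / cfall (r:ℂ) j) := by
        rw [e]; ring
    _ = _ := by rw [h3]; ring
lemma hahn_eq (n r1 r s : ℕ) (t : ℕ) : hahn n r1 r s (t:ℂ) =
    ∑ j ∈ Finset.range (s+1), (-1:ℂ)^j * (s.choose j) *
      (cfall (t:ℂ) j * cfall ((n:ℂ) - s + 1) j / (cfall ((n:ℂ) - r1) j * cfall (r:ℂ) j)) := by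
  unfold hahn
  apply Finset.sum_congr rfl
  intro j _
  rw [cbinom, cfall_choose s j]
  have : (j.factorial:ℂ) ≠ 0 := by exact_mod_cast j.factorial_ne_zero
  field_simp

/-- `[m-u]_j/[m]_j = [m-j]_u/[m]_u` -/
lemma ratio_swap (m u j : ℕ) (hu : u ≤ m) (hj : j ≤ m) :
    cfall ((m:ℂ) - u) j / cfall (m:ℂ) j = cfall ((m:ℂ) - j) u / cfall (m:ℂ) u := by
  have h1 := cfall_ne m u hu
  have h2 := cfall_ne m j hj
  rw [div_eq_div_iff h2 h1]
  linear_combination cfall_swap (m:ℂ) u j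

lemma hahn_zero (n r1 s i u : ℕ) (h1 : s ≤ r1) (h2 : r1 + s ≤ n) (hu : u ≤ i) (hi : i < s) :
    hahn n r1 (n-i) s ((n - r1 - u : ℕ) : ℂ) = 0 := by
  rw [hahn_eq]
  have hv := vanish s u (s-1-i) ((n-r1:ℕ):ℂ) ((n-i:ℕ):ℂ) (by omega)
  have : ∀ j ∈ Finset.range (s+1), (-1:ℂ)^j * (s.choose j) *
      (cfall ((n - r1 - u : ℕ):ℂ) j * cfall ((n:ℂ) - s + 1) j / (cfall ((n:ℂ) - r1) j * cfall ((n-i:ℕ):ℂ) j))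
      = ((-1:ℂ)^j * (s.choose j) * (cfall (((n-r1:ℕ):ℂ) - j) u * cfall (((n-i:ℕ):ℂ) - j) (s-1-i)))
        * (1 / (cfall ((n-r1:ℕ):ℂ) u * cfall ((n-i:ℕ):ℂ) (s-1-i))) := by
    intro j hj
    have hj' : j ≤ s := by simpa [Nat.lt_succ_iff] using hj
    have a := ratio_swap (n-r1) u j (by omega) (by omega)
    have b := ratio_swap (n-i) (s-1-i) j (by omega) (by omega)
    have c1 : ((n-r1-u:ℕ):ℂ) = ((n-r1:ℕ):ℂ) - u := by rw [Nat.cast_sub (by omega)]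
    have c2 : (n:ℂ) - s + 1 = ((n-i:ℕ):ℂ) - (s-1-i:ℕ) := by
      rw [Nat.cast_sub (by omega), Nat.cast_sub (by omega), Nat.cast_sub (by omega)]; push_cast; ring
    have c3 : (n:ℂ) - r1 = ((n-r1:ℕ):ℂ) := by rw [Nat.cast_sub (by omega)]
    rw [c1, c2, c3, mul_div_mul_comm, a, b]
    ring
  rw [Finset.sum_congr rfl this, ← Finset.sum_mul, hv, zero_mul]

lemma hahn_low (n r1 s u : ℕ) (h1 : s ≤ r1) (h2 : r1 + s ≤ n) (hu : u ≤ s) :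
    hahn n r1 s s (u:ℂ) = cfall ((n-r1:ℕ) - ((n:ℂ) - s + 1)) u / cfall ((n-r1:ℕ):ℂ) u := by
  rw [← chu u _ _ (by omega)]
  unfold hahn
  symm
  have c3 : (n:ℂ) - r1 = ((n-r1:ℕ):ℂ) := by rw [Nat.cast_sub (by omega)]
  apply Finset.sum_subset_zero_on_sdiff (Finset.range_mono (by omega))
  · intro j hj
    simp only [Finset.mem_sdiff, Finset.mem_range] at hj
    rw [cbinom_nat, Nat.choose_eq_zero_of_lt (by omega)]; simp
  · intro j hj
    simp only [Finset.mem_range] at hj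
    have := cfall_ne s j (by omega)
    have := cfall_ne (n-r1) j (by omega)
    rw [cbinom_nat, c3]
    field_simp

lemma hahn_top (n r1 s u : ℕ) (h1 : s ≤ r1) (h2 : r1 + s ≤ n) (hu : u ≤ s) :
    hahn n r1 (n-s) s ((n - r1 - u : ℕ) : ℂ) =
      (-1)^s * s.factorial / cfall ((n-s:ℕ):ℂ) s * hahn n r1 s s (u:ℂ) := by
  rw [hahn_low n r1 s u h1 h2 hu, hahn_eq]
  have hv := harm2 s (n-s+1) ((n-r1:ℕ):ℂ) (by omega) u hu
  have c4 : ((n-s+1:ℕ):ℂ) = (n:ℂ) - s + 1 := by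
    push_cast; rw [Nat.cast_sub (by omega)]
  have c0 : ((n-s+1:ℕ):ℂ) ≠ 0 := by exact_mod_cast Nat.succ_ne_zero (n-s)
  have c5 : ∀ k, cfall ((n-s+1:ℕ):ℂ) (k+1) = (n-s+1:ℕ) * cfall ((n-s:ℕ):ℂ) k := by
    intro k
    rw [cfall_succ']; push_cast; rw [add_sub_cancel_right]
  rw [← c4]
  have : ∀ j ∈ Finset.range (s+1), (-1:ℂ)^j * (s.choose j) *
      (cfall ((n - r1 - u : ℕ):ℂ) j * cfall ((n-s+1:ℕ):ℂ) j / (cfall ((n:ℂ) - r1) j * cfall ((n-s:ℕ):ℂ) j))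
      = ((-1:ℂ)^j * (s.choose j) * (cfall (((n-r1:ℕ):ℂ) - j) u / (((n-s+1:ℕ):ℂ) - j)))
        * ((n-s+1:ℕ) / (cfall ((n-r1:ℕ):ℂ) u)) := by
    intro j hj
    have hj' : j ≤ s := by simpa [Nat.lt_succ_iff] using hj
    have a := ratio_swap (n-r1) u j (by omega) (by omega)
    have c1 : ((n-r1-u:ℕ):ℂ) = ((n-r1:ℕ):ℂ) - u := by rw [Nat.cast_sub (by omega)]
    have c3 : (n:ℂ) - r1 = ((n-r1:ℕ):ℂ) := by rw [Nat.cast_sub (by omega)]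
    have d := c5 j
    rw [cfall_succ] at d
    have e1 := cfall_ne (n-s) j (by omega)
    have e2 : ((n-s+1:ℕ):ℂ) - j ≠ 0 := by
      rw [sub_ne_zero]; exact_mod_cast (by omega : n-s+1 ≠ j)
    have b : cfall ((n-s+1:ℕ):ℂ) j / cfall ((n-s:ℕ):ℂ) j = (n-s+1:ℕ) / (((n-s+1:ℕ):ℂ) - j) := by
      rw [div_eq_div_iff e1 e2, d]
    rw [c1, c3, mul_div_mul_comm, a, b]
    ring
  rw [Finset.sum_congr rfl this, ← Finset.sum_mul, hv, c5]
  have e1 := cfall_ne (n-s) s (by omega)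
  have e3 := cfall_ne (n-r1) u (by omega)
  field_simp

lemma const_eq (n r2 r3 s : ℕ) (h2 : s ≤ r2) (h2' : r2 + s ≤ n) (h3 : s ≤ r3) :
    (-1:ℂ)^s * cfall (s:ℂ) s * cfall ((n:ℂ) - s + 1) s / (cfall ((n:ℂ) - r2) s * cfall (r3:ℂ) s)
      * (((n-s).choose r2 : ℂ) * ((-1)^s * s.factorial / cfall ((n-s:ℕ):ℂ) s)) * (r3.choose s)
    = (n.choose r2 : ℂ) / ((n.choose s : ℂ) - if s = 0 then 0 else (n.choose (s - 1) : ℂ)) := by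
  have c3 : (n:ℂ) - r2 = ((n-r2:ℕ):ℂ) := by rw [Nat.cast_sub (by omega)]
  have c4 : (n:ℂ) - s + 1 = ((n-s+1:ℕ):ℂ) := by
    push_cast; rw [Nat.cast_sub (by omega)]
  have hf : (s.factorial:ℂ) ≠ 0 := by exact_mod_cast s.factorial_ne_zero
  have p1 : (r3.choose s : ℂ) ≠ 0 := by exact_mod_cast (Nat.choose_pos h3).ne'
  have p2 : (n.choose s : ℂ) ≠ 0 := by exact_mod_cast (Nat.choose_pos (by omega : s ≤ n)).ne'
  have p3 : ((n-r2).choose s : ℂ) ≠ 0 := by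
    exact_mod_cast (Nat.choose_pos (by omega : s ≤ n-r2)).ne'
  have e1 := cfall_ne (n-s) s (by omega)
  have c5 : cfall ((n-s+1:ℕ):ℂ) s * ((n-s+1:ℕ) - s) = (n-s+1:ℕ) * cfall ((n-s:ℕ):ℂ) s := by
    rw [← cfall_succ, cfall_succ']; push_cast; rw [add_sub_cancel_right]
  have hd : ((n-s+1:ℕ):ℂ) - s ≠ 0 := by
    rw [sub_ne_zero]; exact_mod_cast (by omega : n-s+1 ≠ s)
  have c0 : ((n-s+1:ℕ):ℂ) ≠ 0 := by exact_mod_cast Nat.succ_ne_zero (n-s)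
  have q1 : (n.choose s : ℂ) * (n-s).choose r2 = n.choose r2 * (n-r2).choose s := by
    have := Nat.choose_mul (n := n) (k := r2+s) (s := s) (by omega)
    have t2 := Nat.choose_mul (n := n) (k := r2+s) (s := r2) (by omega)
    rw [Nat.add_sub_cancel] at this
    rw [Nat.add_sub_cancel_left] at t2
    have t3 : (r2+s).choose s = (r2+s).choose r2 := by
      exact (Nat.choose_symm_of_eq_add rfl).symm
    rw [t3] at this
    exact_mod_cast this.symm.trans t2
  have q2 : ((n.choose s : ℂ) - if s = 0 then 0 else (n.choose (s - 1) : ℂ)) * (n-s+1:ℕ)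
      = n.choose s * ((n-s+1:ℕ) - s) := by
    rcases s with _ | k
    · simp
    · have := Nat.choose_succ_right_eq n k
      have t : (n.choose (k+1) : ℂ) * ((k+1:ℕ):ℂ) = n.choose k * ((n-(k+1)+1:ℕ):ℂ) := by
        rw [show n-(k+1)+1 = n-k by omega]
        exact_mod_cast this
      simp only [Nat.succ_ne_zero, if_false, Nat.add_sub_cancel]
      linear_combination t
  have q3 : ((n.choose s : ℂ) - if s = 0 then 0 else (n.choose (s - 1) : ℂ)) ≠ 0 := by
    intro h
    rw [h, zero_mul] at q2
    exact mul_ne_zero p2 hd q2.symm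
  generalize ((n.choose s : ℂ) - if s = 0 then 0 else (n.choose (s - 1) : ℂ)) = Dn at *
  rw [c3, c4, cfall_choose (n-r2), cfall_choose r3, cfall_choose s s, Nat.choose_self]
  have hm : (-1:ℂ)^s * (-1)^s = 1 := by rw [← mul_pow]; simp
  have g1 : cfall ((n-s+1:ℕ):ℂ) s = (n-s+1:ℕ) * cfall ((n-s:ℕ):ℂ) s / ((n-s+1:ℕ) - s) := by
    rw [eq_div_iff hd, c5]
  have g2 : Dn = n.choose s * ((n-s+1:ℕ) - s) / (n-s+1:ℕ) := by
    rw [eq_div_iff c0, q2]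
  have g3 : ((n-s).choose r2 : ℂ) = n.choose r2 * (n-r2).choose s / n.choose s := by
    rw [eq_div_iff p2, ← q1]; ring
  rw [g1, g2, g3]
  generalize cfall ((n-s:ℕ):ℂ) s = A at *
  generalize ((n-s+1:ℕ):ℂ) = N at *
  field_simp
  have := hm
  ring_nf at this ⊢
  simp [this]

lemma hahn_comp {Ω : Type*} [Fintype Ω] [DecidableEq Ω] (n r1 r2 r3 s : ℕ)
    (hn : Fintype.card Ω = n) (h1 : s ≤ r1) (h1' : r1 + s ≤ n) (h2 : s ≤ r2) (h2' : r2 + s ≤ n)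
    (h3 : s ≤ r3) (x1 x3 : Finset Ω) (hx1 : x1.card = r1) (hx3 : x3.card = r3) :
    ∑ x2 ∈ (Finset.univ : Finset Ω).powersetCard r2,
      hahn n r2 r3 s ((x3 \ x2).card : ℂ) * hahn n r1 r2 s ((x2 \ x1).card : ℂ)
    = (n.choose r2 : ℂ) / ((n.choose s : ℂ) - if s = 0 then 0 else (n.choose (s - 1) : ℂ))
       * hahn n r1 r3 s ((x3 \ x1).card : ℂ) := by
  set c : ℕ → ℂ := fun j => (-1:ℂ)^j * cfall (s:ℂ) j * cfall ((n:ℂ) - s + 1) j /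
    (cfall ((n:ℂ) - r2) j * cfall (r3:ℂ) j) with hc
  -- inner sums
  have inner : ∀ y : Finset Ω, y.card ≤ s →
      ∑ x2 ∈ yᶜ.powersetCard r2, hahn n r1 r2 s ((x2 \ x1).card : ℂ)
      = ((n - y.card).choose r2 : ℂ) * hahn n r1 (n - y.card) s ((n - r1 - (y \ x1).card : ℕ) : ℂ) := by
    intro y hy
    have hyc : yᶜ.card = n - y.card := by rw [Finset.card_compl, hn]
    rw [sum_hahn yᶜ x1 n r1 r2 s h2 (by omega), hyc]
    congr 3
    have e : yᶜ \ x1 = (x1 ∪ (y \ x1))ᶜ := by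
      ext a; simp; tauto
    rw [e, Finset.card_compl, Finset.card_union_of_disjoint Finset.disjoint_sdiff, hn, hx1]
    omega
  have expand : ∀ x2 : Finset Ω, hahn n r2 r3 s ((x3 \ x2).card : ℂ) =
      ∑ j ∈ Finset.range (s+1), c j * ∑ y ∈ x3.powersetCard j, if Disjoint y x2 then (1:ℂ) else 0 := by
    intro x2
    unfold hahn
    apply Finset.sum_congr rfl
    intro j _
    have : (∑ y ∈ x3.powersetCard j, if Disjoint y x2 then (1:ℂ) else 0) = ((x3 \ x2).card.choose j : ℂ) := by
      rw [Finset.sum_boole, ← Finset.card_powersetCard]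
      congr 2
      ext J
      simp only [Finset.mem_filter, Finset.mem_powersetCard, Finset.subset_sdiff]
      tauto
    rw [this, cbinom_nat, hc]
    ring
  have step : ∑ x2 ∈ (Finset.univ : Finset Ω).powersetCard r2,
      hahn n r2 r3 s ((x3 \ x2).card : ℂ) * hahn n r1 r2 s ((x2 \ x1).card : ℂ)
      = ∑ j ∈ Finset.range (s+1), c j * ∑ y ∈ x3.powersetCard j,
          ∑ x2 ∈ yᶜ.powersetCard r2, hahn n r1 r2 s ((x2 \ x1).card : ℂ) := by
    simp only [expand, Finset.sum_mul]
    rw [Finset.sum_comm]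
    apply Finset.sum_congr rfl
    intro j _
    simp only [mul_assoc, Finset.sum_mul]
    rw [← Finset.mul_sum, Finset.sum_comm]
    congr 1
    apply Finset.sum_congr rfl
    intro y _
    simp only [ite_mul, one_mul, zero_mul]
    rw [← Finset.sum_filter]
    apply Finset.sum_congr _ (fun _ _ => rfl)
    ext x
    simp only [Finset.mem_filter, Finset.mem_powersetCard, Finset.subset_univ, true_and,
      Finset.subset_compl_iff_disjoint_left]
    tauto
  rw [step, Finset.sum_range_succ, Finset.sum_eq_zero, zero_add]
  · have : ∀ y ∈ x3.powersetCard s, ∑ x2 ∈ yᶜ.powersetCard r2, hahn n r1 r2 s ((x2 \ x1).card : ℂ)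
        = (((n-s).choose r2 : ℂ) * ((-1)^s * s.factorial / cfall ((n-s:ℕ):ℂ) s)) *
          hahn n r1 s s ((y \ x1).card : ℂ) := by
      intro y hy
      rw [Finset.mem_powersetCard] at hy
      have hle : (y \ x1).card ≤ s := hy.2 ▸ Finset.card_le_card Finset.sdiff_subset
      rw [inner y hy.2.le, hy.2, hahn_top n r1 s _ h1 h1' hle]
      ring
    rw [Finset.sum_congr rfl this, ← Finset.mul_sum, sum_hahn x3 x1 n r1 s s le_rfl (by omega), hx3,
      ← const_eq n r2 r3 s h2 h2' h3]
    ring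
  · intro j hj
    rw [Finset.mem_range] at hj
    rw [Finset.sum_eq_zero, mul_zero]
    intro y hy
    rw [Finset.mem_powersetCard] at hy
    have hle : (y \ x1).card ≤ j := hy.2 ▸ Finset.card_le_card Finset.sdiff_subset
    rw [inner y (by omega), hy.2, hahn_zero n r1 s j _ h1 h1' hle hj, mul_zero]

/-- Multiplication table: `Λ_s^{r2,r3} ∘ Λ_s^{r1,r2} = (binom(n,r2)/(binom(n,s) - binom(n,s-1))) Λ_s^{r1,r3}`,
where `binom(n,-1) = 0`. -/
theorem stmt_9 {Ω : Type*} [Fintype Ω] [DecidableEq Ω] (n r1 r2 r3 s : ℕ)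
    (hn : Fintype.card Ω = n) (h1 : r1 ≤ n) (h2 : r2 ≤ n) (h3 : r3 ≤ n)
    (hs1 : s ≤ min r1 (n - r1)) (hs2 : s ≤ min r2 (n - r2)) (hs3 : s ≤ min r3 (n - r3))
    (ψ : {x : Finset Ω // x.card = r1} → ℂ) :
    Lam Ω n r2 r3 s (Lam Ω n r1 r2 s ψ) =
      ((n.choose r2 : ℂ) /
          ((n.choose s : ℂ) - if s = 0 then 0 else (n.choose (s - 1) : ℂ))) •
        Lam Ω n r1 r3 s ψ := by
  rw [le_min_iff] at hs1 hs2 hs3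
  funext x3
  simp only [Lam, Pi.smul_apply, smul_eq_mul, Finset.mul_sum]
  rw [Finset.sum_comm]
  apply Finset.sum_congr rfl
  intro x1 _
  have key := hahn_comp n r1 r2 r3 s hn hs1.1 (by omega) hs2.1 (by omega) hs3.1
    (x1 : Finset Ω) (x3 : Finset Ω) x1.2 x3.2
  rw [← mul_assoc, ← key, Finset.sum_mul]
  symm
  rw [Finset.sum_subtype _ (p := fun x : Finset Ω => x.card = r2) (by intro x; simp [Finset.mem_powersetCard])]
  apply Finset.sum_congr rfl
  intro x2 _
  ring
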